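/- Every local minimum of ℓ_λ in U(λ,θ) is an isolated local minimum: if W ∈ U(λ,θ) is a local minimum of ℓ_λ (no differentiability assumed), then there exists ε > 0 such that ℓ_λ(V) > ℓ_λ(W) for all V with 0 < ‖V − W‖ < ε. -/

import Mathlib

open scoped BigOperators

/-- Index set for all weights of the network: a weight `w^i_{j,k}` connects
neuron `j` in layer `i` to neuron `k` in layer `i+1`. -/
abbrev WeightIdx (n : ℕ → ℕ) (H : ℕ) : Type :=
  (i : Fin (H + 1)) × (Fin (n i) × Fin (n (i + 1)))

/-- Weight space `ℝ^m`, with the Euclidean norm. -/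
abbrev WeightSpace (n : ℕ → ℕ) (H : ℕ) : Type :=
  EuclideanSpace ℝ (WeightIdx n H)

/-- Activations of the feed-forward ReLU network:
`x_0 = a`, `x_{k+1} = σ(W_k^T x_k)`. -/
def netAct (n : ℕ → ℕ) (H : ℕ) (W : WeightSpace n H)
    (a : EuclideanSpace ℝ (Fin (n 0))) : (k : ℕ) → k ≤ H + 1 → (Fin (n k) → ℝ)
  | 0, _ => a
  | k + 1, h => fun j =>
      max (∑ l : Fin (n k), W ⟨⟨k, h⟩, (l, j)⟩ * netAct n H W a k (Nat.le_of_succ_le h) l) 0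

/-- Scalar output of the ReLU network, `y(a, W)`. -/
def netOut (n : ℕ → ℕ) (H : ℕ) (hout : n (H + 1) = 1) (W : WeightSpace n H)
    (a : EuclideanSpace ℝ (Fin (n 0))) : ℝ :=
  netAct n H W a (H + 1) le_rfl ⟨0, by omega⟩

/-- Quadratic training loss `ℓ(W)`. -/
noncomputable def loss (n : ℕ → ℕ) (H N : ℕ) (hout : n (H + 1) = 1)
    (a : Fin N → EuclideanSpace ℝ (Fin (n 0)))
    (f : EuclideanSpace ℝ (Fin (n 0)) → ℝ) (W : WeightSpace n H) : ℝ :=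
  (1 / (2 * (N : ℝ))) * ∑ i, (f (a i) - netOut n H hout W (a i)) ^ 2

/-- Regularized loss `ℓ_λ(W) = ℓ(W) + (λ/2)‖W‖²`. -/
noncomputable def lossReg (n : ℕ → ℕ) (H N : ℕ) (hout : n (H + 1) = 1)
    (a : Fin N → EuclideanSpace ℝ (Fin (n 0)))
    (f : EuclideanSpace ℝ (Fin (n 0)) → ℝ) (lam : ℝ) (W : WeightSpace n H) : ℝ :=
  loss n H N hout a f W + lam / 2 * ‖W‖ ^ 2

/-- The `i`-th weight matrix `W_i` of a weight vector `W`. -/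
def block (n : ℕ → ℕ) (H : ℕ) (W : WeightSpace n H) (i : Fin (H + 1)) :
    Matrix (Fin (n i)) (Fin (n (i + 1))) ℝ :=
  Matrix.of fun j k => W ⟨i, (j, k)⟩

/-- Operator norm (induced by the Euclidean norms) of a matrix. -/
noncomputable def opNorm2 {p q : ℕ} (M : Matrix (Fin p) (Fin q) ℝ) : ℝ :=
  ‖LinearMap.toContinuousLinearMap (Matrix.toEuclideanLin M)‖

/-- `‖W‖_* = max_i ‖W_i‖₂`. -/
noncomputable def starNorm (n : ℕ → ℕ) (H : ℕ) (W : WeightSpace n H) : ℝ :=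
  ⨆ i : Fin (H + 1), opNorm2 (block n H W i)

/-- The set `U(λ,θ)`. -/
noncomputable def Uset (n : ℕ → ℕ) (H N : ℕ) (hout : n (H + 1) = 1)
    (a : Fin N → EuclideanSpace ℝ (Fin (n 0)))
    (f : EuclideanSpace ℝ (Fin (n 0)) → ℝ) (lam θ r : ℝ) : Set (WeightSpace n H) :=
  {W | Real.sqrt (loss n H N hout a f W) * starNorm n H W ^ (H - 1) <
    (lam - θ) / (Real.sqrt 2 * ((H : ℝ) * ((H : ℝ) + 1)) * r)}


lemma le_of_sq_le_sq_aux {x y : ℝ} (h : x ^ 2 ≤ y ^ 2) (hy : 0 ≤ y) : x ≤ y :=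
  abs_le_of_sq_le_sq h hy |> fun h => (le_abs_self x).trans h

/-- One-sided directional derivative of ReLU at `z` in direction `d`. -/
noncomputable def reluD (z d : ℝ) : ℝ := if 0 < z then d else if z < 0 then 0 else max d 0

lemma reluD_lip (z x y : ℝ) : |reluD z x - reluD z y| ≤ |x - y| := by
  unfold reluD
  split_ifs
  · exact le_rfl
  · simp
  · exact abs_max_sub_max_le_abs x y 0

lemma reluD_zero (z : ℝ) : reluD z 0 = 0 := by
  unfold reluD; split_ifs <;> simp

lemma reluD_homog (z t d : ℝ) (ht : 0 ≤ t) : reluD z (t * d) = t * reluD z d := by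
  unfold reluD
  split_ifs
  · rfl
  · simp
  · rw [mul_max_of_nonneg _ _ ht, mul_zero]

lemma relu_exact (z : ℝ) : ∀ᶠ s in nhds z, max s 0 = max z 0 + reluD z (s - z) := by
  rcases lt_trichotomy z 0 with h | h | h
  · filter_upwards [Iio_mem_nhds h] with s hs
    have hs : s < 0 := hs
    simp [reluD, h, not_lt.mpr h.le, h.le, hs.le]
  · subst h
    exact Filter.Eventually.of_forall fun s => by simp [reluD]
  · filter_upwards [Ioi_mem_nhds h] with s hs
    have hs : 0 < s := hs
    simp [reluD, h, h.le, hs.le]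

/-- Euclidean norm of a plain vector. -/
noncomputable def eN {p : ℕ} (v : Fin p → ℝ) : ℝ := ‖(WithLp.toLp 2 v : EuclideanSpace ℝ (Fin p))‖

lemma eN_sq {p : ℕ} (v : Fin p → ℝ) : eN v ^ 2 = ∑ i, v i ^ 2 := by
  unfold eN
  rw [EuclideanSpace.norm_sq_eq]; simp

lemma eN_nonneg {p : ℕ} (v : Fin p → ℝ) : 0 ≤ eN v := norm_nonneg _

lemma eN_add {p : ℕ} (v w : Fin p → ℝ) : eN (fun i => v i + w i) ≤ eN v + eN w :=
  norm_add_le (WithLp.toLp 2 v : EuclideanSpace ℝ (Fin p)) (WithLp.toLp 2 w)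

lemma eN_mono {p : ℕ} (v w : Fin p → ℝ) (h : ∀ i, |v i| ≤ |w i|) : eN v ≤ eN w := by
  apply le_of_sq_le_sq_aux _ (eN_nonneg w)
  rw [eN_sq, eN_sq]
  exact Finset.sum_le_sum fun i _ => sq_le_sq.mpr (h i)

lemma abs_le_eN {p : ℕ} (v : Fin p → ℝ) (i : Fin p) : |v i| ≤ eN v := by
  apply abs_le_of_sq_le_sq _ (eN_nonneg v)
  rw [eN_sq]
  exact Finset.single_le_sum (f := fun i => v i ^ 2) (fun _ _ => sq_nonneg _) (Finset.mem_univ i)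

/-- Transposed matrix-vector product with the `k`-th weight matrix. -/
def mv (n : ℕ → ℕ) (H : ℕ) (W : WeightSpace n H) (k : ℕ) (h : k + 1 ≤ H + 1)
    (x : Fin (n k) → ℝ) : Fin (n (k + 1)) → ℝ :=
  fun j => ∑ l : Fin (n k), W ⟨⟨k, h⟩, (l, j)⟩ * x l

/-- Frobenius norm of the `k`-th weight matrix. -/
noncomputable def fro (n : ℕ → ℕ) (H : ℕ) (W : WeightSpace n H) (k : ℕ) : ℝ :=
  if h : k < H + 1 then
    Real.sqrt (∑ p : Fin (n k) × Fin (n (k + 1)), W ⟨⟨k, h⟩, p⟩ ^ 2) else 0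

lemma fro_nonneg (n : ℕ → ℕ) (H : ℕ) (W : WeightSpace n H) (k : ℕ) : 0 ≤ fro n H W k := by
  unfold fro; split_ifs <;> positivity

lemma sum_fro (n : ℕ → ℕ) (H : ℕ) (W : WeightSpace n H) :
    ∑ k ∈ Finset.range (H + 1), fro n H W k ^ 2 = ‖W‖ ^ 2 := by
  rw [EuclideanSpace.norm_sq_eq, Fintype.sum_sigma, Finset.sum_range]
  refine Finset.sum_congr rfl fun i _ => ?_
  unfold fro
  rw [dif_pos i.2, Real.sq_sqrt (Finset.sum_nonneg fun _ _ => sq_nonneg _)]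
  simp

lemma fro_le (n : ℕ → ℕ) (H : ℕ) (W : WeightSpace n H) (k : ℕ) (h : k < H + 1) :
    fro n H W k ≤ ‖W‖ := by
  apply le_of_sq_le_sq_aux _ (norm_nonneg W)
  rw [← sum_fro]
  exact Finset.single_le_sum (f := fun k => fro n H W k ^ 2) (fun _ _ => sq_nonneg _)
    (Finset.mem_range.mpr h)

lemma mv_fro (n : ℕ → ℕ) (H : ℕ) (W : WeightSpace n H) (k : ℕ) (h : k + 1 ≤ H + 1)
    (x : Fin (n k) → ℝ) : eN (mv n H W k h x) ≤ fro n H W k * eN x := by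
  apply le_of_sq_le_sq_aux _ (mul_nonneg (fro_nonneg _ _ _ _) (eN_nonneg x))
  rw [mul_pow, eN_sq, eN_sq]
  unfold fro
  rw [dif_pos (show k < H + 1 from h), Real.sq_sqrt (Finset.sum_nonneg fun _ _ => sq_nonneg _),
    Fintype.sum_prod_type, Finset.sum_comm, Finset.sum_mul]
  exact Finset.sum_le_sum fun j _ => Finset.sum_mul_sq_le_sq_mul_sq _ _ _

lemma mv_op (n : ℕ → ℕ) (H : ℕ) (W : WeightSpace n H) (k : ℕ) (h : k + 1 ≤ H + 1)
    (x : Fin (n k) → ℝ) : eN (mv n H W k h x) ≤ starNorm n H W * eN x := by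
  have h1 : opNorm2 (block n H W ⟨k, h⟩) ≤ starNorm n H W :=
    le_ciSup (f := fun i : Fin (H + 1) => opNorm2 (block n H W i)) (Set.finite_range _).bddAbove
      ⟨k, h⟩
  refine le_trans ?_ (mul_le_mul_of_nonneg_right h1 (eN_nonneg x))
  set M := block n H W ⟨k, h⟩ with hM
  have h2 := (LinearMap.toContinuousLinearMap (Matrix.toEuclideanLin M)).le_opNorm
    (WithLp.toLp 2 (mv n H W k h x))
  set v := mv n H W k h x with hv
  have h3 : eN v ^ 2 ≤ eN x * (opNorm2 M * eN v) := by
    have h4 : eN v ^ 2 = inner ℝ (WithLp.toLp 2 x : EuclideanSpace ℝ (Fin (n k)))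
        (Matrix.toEuclideanLin M (WithLp.toLp 2 v)) := by
      rw [eN_sq, PiLp.inner_apply]
      have h5 : ∀ l : Fin (n k), inner ℝ ((WithLp.toLp 2 x : EuclideanSpace ℝ (Fin (n k))) l)
          (Matrix.toEuclideanLin M (WithLp.toLp 2 v) l) = ∑ j, x l * (M l j * v j) := by
        intro l
        rw [← Finset.mul_sum]
        exact mul_comm _ _
      rw [Finset.sum_congr rfl fun l _ => h5 l, Finset.sum_comm]
      refine Finset.sum_congr rfl fun j _ => ?_
      rw [sq]
      nth_rewrite 1 [hv]
      unfold mv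
      rw [Finset.sum_mul]
      refine Finset.sum_congr rfl fun l _ => ?_
      simp only [hM, block, Matrix.of_apply]
      ring
    rw [h4]
    refine (real_inner_le_norm _ _).trans ?_
    exact mul_le_mul_of_nonneg_left h2 (norm_nonneg _)
  rcases (eN_nonneg v).eq_or_lt with h0 | h0
  · rw [← h0]; exact mul_nonneg (norm_nonneg _) (eN_nonneg x)
  · nlinarith

/-- Directional derivative of the activations at `W` in direction `X`. -/
noncomputable def dAct (n : ℕ → ℕ) (H : ℕ) (W X : WeightSpace n H)
    (a : EuclideanSpace ℝ (Fin (n 0))) : (k : ℕ) → k ≤ H + 1 → (Fin (n k) → ℝ)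
  | 0, _ => fun _ => 0
  | k + 1, h => fun j =>
      reluD (mv n H W k h (netAct n H W a k (Nat.le_of_succ_le h)) j)
        (mv n H W k h (dAct n H W X a k (Nat.le_of_succ_le h)) j
          + mv n H X k h (netAct n H W a k (Nat.le_of_succ_le h)) j)

lemma netAct_succ (n : ℕ → ℕ) (H : ℕ) (W : WeightSpace n H)
    (a : EuclideanSpace ℝ (Fin (n 0))) (k : ℕ) (h : k + 1 ≤ H + 1) (j : Fin (n (k + 1))) :
    netAct n H W a (k + 1) h j
      = max (mv n H W k h (netAct n H W a k (Nat.le_of_succ_le h)) j) 0 := rfl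

lemma dAct_succ (n : ℕ → ℕ) (H : ℕ) (W X : WeightSpace n H)
    (a : EuclideanSpace ℝ (Fin (n 0))) (k : ℕ) (h : k + 1 ≤ H + 1) (j : Fin (n (k + 1))) :
    dAct n H W X a (k + 1) h j
      = reluD (mv n H W k h (netAct n H W a k (Nat.le_of_succ_le h)) j)
        (mv n H W k h (dAct n H W X a k (Nat.le_of_succ_le h)) j
          + mv n H X k h (netAct n H W a k (Nat.le_of_succ_le h)) j) := rfl

lemma dAct_homog (n : ℕ → ℕ) (H : ℕ) (W X : WeightSpace n H)
    (a : EuclideanSpace ℝ (Fin (n 0))) (t : ℝ) (ht : 0 ≤ t) (k : ℕ) :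
    ∀ (h : k ≤ H + 1) (j : Fin (n k)),
      dAct n H W (t • X) a k h j = t * dAct n H W X a k h j := by
  induction k with
  | zero => intro h j; simp [dAct]
  | succ k ih =>
    intro h j
    rw [dAct_succ, dAct_succ, ← reluD_homog _ _ _ ht]
    congr 1
    simp only [mv, ih, PiLp.smul_apply, smul_eq_mul, mul_add, Finset.mul_sum]
    congr 1 <;> exact Finset.sum_congr rfl fun l _ => by ring

lemma netAct_cont (n : ℕ → ℕ) (H : ℕ) (a : EuclideanSpace ℝ (Fin (n 0))) (k : ℕ) :
    ∀ (h : k ≤ H + 1) (j : Fin (n k)), Continuous fun V => netAct n H V a k h j := by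
  induction k with
  | zero => intro h j; simp only [netAct]; exact continuous_const
  | succ k ih =>
    intro h j
    simp only [netAct]
    have := ih (Nat.le_of_succ_le h)
    fun_prop

lemma mv_cont (n : ℕ → ℕ) (H : ℕ) (a : EuclideanSpace ℝ (Fin (n 0))) (k : ℕ) 
    (h : k + 1 ≤ H + 1) (j : Fin (n (k + 1))) :
    Continuous fun V => mv n H V k h (netAct n H V a k (Nat.le_of_succ_le h)) j := by
  have := netAct_cont n H a k (Nat.le_of_succ_le h)
  unfold mv
  fun_prop

/-- sum of the Frobenius norms of the first `k` blocks -/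
noncomputable def sS (n : ℕ → ℕ) (H : ℕ) (X : WeightSpace n H) (k : ℕ) : ℝ :=
  ∑ i ∈ Finset.range k, fro n H X i

/-- sum of products of pairs of Frobenius norms of the first `k` blocks -/
noncomputable def sQ (n : ℕ → ℕ) (H : ℕ) (X : WeightSpace n H) (k : ℕ) : ℝ :=
  ∑ i ∈ Finset.range k, fro n H X i * sS n H X i

lemma sS_sq (n : ℕ → ℕ) (H : ℕ) (X : WeightSpace n H) (k : ℕ) :
    sS n H X k ^ 2 = 2 * sQ n H X k + ∑ i ∈ Finset.range k, fro n H X i ^ 2 := by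
  induction k with
  | zero => simp [sS, sQ]
  | succ k ih =>
    have h1 : sS n H X (k + 1) = sS n H X k + fro n H X k := Finset.sum_range_succ _ _
    have h2 : sQ n H X (k + 1) = sQ n H X k + fro n H X k * sS n H X k :=
      Finset.sum_range_succ _ _
    rw [h1, h2, Finset.sum_range_succ]
    linear_combination ih

lemma sS_sq_le (n : ℕ → ℕ) (H : ℕ) (X : WeightSpace n H) :
    sS n H X (H + 1) ^ 2 ≤ (H + 1) * ‖X‖ ^ 2 := by
  have := sq_sum_le_card_mul_sum_sq (s := Finset.range (H + 1)) (f := fro n H X)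
  rw [sum_fro] at this
  simpa [sS] using this

lemma sS_le (n : ℕ → ℕ) (H : ℕ) (X : WeightSpace n H) :
    sS n H X (H + 1) ≤ (H + 1) * ‖X‖ := by
  apply le_of_sq_le_sq_aux _ (by positivity)
  refine (sS_sq_le n H X).trans ?_
  rw [mul_pow]
  have : (0:ℝ) ≤ H := by positivity
  gcongr
  nlinarith

lemma sQ_le (n : ℕ → ℕ) (H : ℕ) (X : WeightSpace n H) :
    sQ n H X (H + 1) ≤ H / 2 * ‖X‖ ^ 2 := by
  have h1 := sS_sq n H X (H + 1)
  have h2 := sS_sq_le n H X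
  rw [sum_fro] at h1
  linarith

lemma netAct_bound (n : ℕ → ℕ) (H : ℕ) (W : WeightSpace n H) (u r : ℝ) (hu : 0 < u)
    (hWu : starNorm n H W ≤ u) (a : EuclideanSpace ℝ (Fin (n 0))) (ha : ‖a‖ ≤ r) (k : ℕ) :
    ∀ (h : k ≤ H + 1), eN (netAct n H W a k h) ≤ u ^ k * r := by
  induction k with
  | zero => intro h; simpa [netAct, eN] using ha
  | succ k ih =>
    intro h
    have h1 : eN (netAct n H W a (k + 1) h)
        ≤ eN (mv n H W k h (netAct n H W a k (Nat.le_of_succ_le h))) := by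
      apply eN_mono
      intro j
      rw [netAct_succ]
      simpa using abs_max_sub_max_le_abs
        (mv n H W k h (netAct n H W a k (Nat.le_of_succ_le h)) j) 0 0
    have h2 := mv_op n H W k h (netAct n H W a k (Nat.le_of_succ_le h))
    have h3 := ih (Nat.le_of_succ_le h)
    calc _ ≤ _ := h1.trans h2
      _ ≤ u * (u ^ k * r) := mul_le_mul hWu h3 (eN_nonneg _) hu.le
      _ = _ := by ring

lemma dAct_bound (n : ℕ → ℕ) (H : ℕ) (W X : WeightSpace n H) (u r : ℝ) (hu : 0 < u)
    (hWu : starNorm n H W ≤ u) (a : EuclideanSpace ℝ (Fin (n 0))) (ha : ‖a‖ ≤ r) (k : ℕ) :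
    ∀ (h : k ≤ H + 1), u * eN (dAct n H W X a k h) ≤ u ^ k * r * sS n H X k := by
  induction k with
  | zero =>
    intro h
    have : eN (fun _ : Fin (n 0) => (0:ℝ)) = 0 := by
      have := eN_sq (fun _ : Fin (n 0) => (0:ℝ)); simpa using this
    simp [dAct, this, sS]
  | succ k ih =>
    intro h
    set x := netAct n H W a k (Nat.le_of_succ_le h) with hx
    set d := dAct n H W X a k (Nat.le_of_succ_le h) with hd
    have h1 : eN (dAct n H W X a (k + 1) h)
        ≤ eN (fun j => mv n H W k h d j + mv n H X k h x j) := by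
      apply eN_mono
      intro j
      rw [dAct_succ]
      have := reluD_lip (mv n H W k h x j) (mv n H W k h d j + mv n H X k h x j) 0
      simpa [reluD_zero] using this
    have h2 := eN_add (mv n H W k h d) (mv n H X k h x)
    have h3 := mv_op n H W k h d
    have h4 := mv_fro n H X k h x
    have h5 : starNorm n H W * eN d ≤ u * eN d := mul_le_mul_of_nonneg_right hWu (eN_nonneg _)
    have h6 : fro n H X k * eN x ≤ fro n H X k * (u ^ k * r) :=
      mul_le_mul_of_nonneg_left (netAct_bound n H W u r hu hWu a ha k _) (fro_nonneg _ _ _ _)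
    have h7 := ih (Nat.le_of_succ_le h)
    have h8 : sS n H X (k + 1) = sS n H X k + fro n H X k := Finset.sum_range_succ _ _
    calc u * eN (dAct n H W X a (k + 1) h)
        ≤ u * (u ^ k * r * sS n H X k + fro n H X k * (u ^ k * r)) :=
          mul_le_mul_of_nonneg_left (by linarith) hu.le
      _ = _ := by rw [h8]; ring

lemma eAct_bound (n : ℕ → ℕ) (H : ℕ) (W X : WeightSpace n H) (u r : ℝ) (hu : 0 < u)
    (hWu : starNorm n H W + ‖X‖ ≤ u) (a : EuclideanSpace ℝ (Fin (n 0))) (ha : ‖a‖ ≤ r)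
    (hex : ∀ (k : ℕ) (h : k + 1 ≤ H + 1) (j : Fin (n (k + 1))),
      max (mv n H (W + X) k h (netAct n H (W + X) a k (Nat.le_of_succ_le h)) j) 0
      = max (mv n H W k h (netAct n H W a k (Nat.le_of_succ_le h)) j) 0
        + reluD (mv n H W k h (netAct n H W a k (Nat.le_of_succ_le h)) j)
          (mv n H (W + X) k h (netAct n H (W + X) a k (Nat.le_of_succ_le h)) j
            - mv n H W k h (netAct n H W a k (Nat.le_of_succ_le h)) j)) (k : ℕ) :
    ∀ (h : k ≤ H + 1), u ^ 2 * eN (fun j => netAct n H (W + X) a k h j - netAct n H W a k h j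
      - dAct n H W X a k h j) ≤ u ^ k * r * sQ n H X k := by
  have hWu' : starNorm n H W ≤ u := by linarith [norm_nonneg X]
  induction k with
  | zero =>
    intro h
    have : eN (fun _ : Fin (n 0) => (0:ℝ)) = 0 := by
      have := eN_sq (fun _ : Fin (n 0) => (0:ℝ)); simpa using this
    simp [netAct, dAct, this, sQ]
  | succ k ih =>
    intro h
    have h7 := ih (Nat.le_of_succ_le h)
    have h9 := dAct_bound n H W X u r hu hWu' a ha k (Nat.le_of_succ_le h)
    have hex' := hex k h
    set x := netAct n H W a k (Nat.le_of_succ_le h) with hx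
    set y := netAct n H (W + X) a k (Nat.le_of_succ_le h) with hy
    set d := dAct n H W X a k (Nat.le_of_succ_le h) with hd
    set e : Fin (n k) → ℝ := fun j => y j - x j - d j with he
    have h1 : eN (fun j => netAct n H (W + X) a (k + 1) h j - netAct n H W a (k + 1) h j
          - dAct n H W X a (k + 1) h j)
        ≤ eN (fun j => (mv n H W k h e j + mv n H X k h e j) + mv n H X k h d j) := by
      apply eN_mono
      intro j
      rw [dAct_succ, netAct_succ, netAct_succ, hex' j, add_sub_cancel_left]
      refine (reluD_lip _ _ _).trans (le_of_eq ?_)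
      congr 1
      simp only [mv, he, ← Finset.sum_add_distrib, ← Finset.sum_sub_distrib, PiLp.add_apply]
      exact Finset.sum_congr rfl fun l _ => by ring
    have h2 := eN_add (fun j => mv n H W k h e j + mv n H X k h e j) (mv n H X k h d)
    have h2' := eN_add (mv n H W k h e) (mv n H X k h e)
    have h3 := mv_op n H W k h e
    have h4 := mv_fro n H X k h e
    have h5 := mv_fro n H X k h d
    have h6 : (starNorm n H W + fro n H X k) * eN e ≤ u * eN e :=
      mul_le_mul_of_nonneg_right (by linarith [fro_le n H X k h]) (eN_nonneg _)
    have h10 : eN (fun j => netAct n H (W + X) a (k + 1) h j - netAct n H W a (k + 1) h j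
          - dAct n H W X a (k + 1) h j) ≤ u * eN e + fro n H X k * eN d := by linarith
    have h8 : sQ n H X (k + 1) = sQ n H X k + fro n H X k * sS n H X k :=
      Finset.sum_range_succ _ _
    have h11 := mul_le_mul_of_nonneg_left h7 hu.le
    have h12 := mul_le_mul_of_nonneg_left h9 (mul_nonneg hu.le (fro_nonneg n H X k))
    have h13 := mul_le_mul_of_nonneg_left h10 (sq_nonneg u)
    rw [h8]
    calc _ ≤ _ := h13
      _ = u * (u ^ 2 * eN e) + u * fro n H X k * (u * eN d) := by ring
      _ ≤ _ := add_le_add h11 h12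
      _ = _ := by ring

/-- Directional derivative of the output. -/
noncomputable def dOut (n : ℕ → ℕ) (H : ℕ) (hout : n (H + 1) = 1) (W X : WeightSpace n H)
    (a : EuclideanSpace ℝ (Fin (n 0))) : ℝ :=
  dAct n H W X a (H + 1) le_rfl ⟨0, by omega⟩

lemma dOut_bound (n : ℕ → ℕ) (H : ℕ) (hout : n (H + 1) = 1) (W X : WeightSpace n H) (u r : ℝ)
    (hu : 0 < u) (hr : 0 < r)
    (hWu : starNorm n H W ≤ u) (a : EuclideanSpace ℝ (Fin (n 0))) (ha : ‖a‖ ≤ r) :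
    |dOut n H hout W X a| ≤ u ^ H * r * (H + 1) * ‖X‖ := by
  have h1 := dAct_bound n H W X u r hu hWu a ha (H + 1) le_rfl
  have h2 := abs_le_eN (dAct n H W X a (H + 1) le_rfl) ⟨0, by omega⟩
  have h3 := mul_le_mul_of_nonneg_left (sS_le n H X) (show 0 ≤ u ^ (H + 1) * r by positivity)
  refine le_of_mul_le_mul_left ?_ hu
  calc _ ≤ _ := mul_le_mul_of_nonneg_left h2 hu.le
    _ ≤ _ := h1.trans h3
    _ = _ := by ring

lemma eOut_bound (n : ℕ → ℕ) (H : ℕ) (hH : 1 ≤ H) (hout : n (H + 1) = 1) (W : WeightSpace n H)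
    (u r : ℝ) (hu : 0 < u) (hr : 0 < r)
    (hWu : starNorm n H W < u) (a : EuclideanSpace ℝ (Fin (n 0))) (ha : ‖a‖ ≤ r) :
    ∀ᶠ V in nhds W, |netOut n H hout V a - netOut n H hout W a - dOut n H hout W (V - W) a|
      ≤ u ^ (H - 1) * r * (H / 2) * ‖V - W‖ ^ 2 := by
  have hex : ∀ᶠ V in nhds W, ∀ k : Fin (H + 1), ∀ j : Fin (n (k + 1)),
      max (mv n H V k k.2 (netAct n H V a k (Nat.le_of_succ_le k.2)) j) 0
      = max (mv n H W k k.2 (netAct n H W a k (Nat.le_of_succ_le k.2)) j) 0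
        + reluD (mv n H W k k.2 (netAct n H W a k (Nat.le_of_succ_le k.2)) j)
          (mv n H V k k.2 (netAct n H V a k (Nat.le_of_succ_le k.2)) j
            - mv n H W k k.2 (netAct n H W a k (Nat.le_of_succ_le k.2)) j) := by
    rw [Filter.eventually_all]; intro k
    rw [Filter.eventually_all]; intro j
    exact ((mv_cont n H a k k.2 j).tendsto W).eventually (relu_exact _)
  have hball : ∀ᶠ V in nhds W, ‖V - W‖ < u - starNorm n H W := by
    have : Continuous fun V : WeightSpace n H => ‖V - W‖ := by fun_prop
    exact (this.tendsto W).eventually (Iio_mem_nhds (by simpa using hWu))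
  filter_upwards [hex, hball] with V hV hV2
  have hVW : W + (V - W) = V := by abel
  have h1 := eAct_bound n H W (V - W) u r hu (by linarith) a ha
    (by rw [hVW]; intro k h j; exact hV ⟨k, h⟩ j) (H + 1) le_rfl
  rw [hVW] at h1
  have h2 := abs_le_eN (fun j => netAct n H V a (H + 1) le_rfl j - netAct n H W a (H + 1) le_rfl j
      - dAct n H W (V - W) a (H + 1) le_rfl j) ⟨0, by omega⟩
  have h3 := mul_le_mul_of_nonneg_left (sQ_le n H (V - W))
    (show 0 ≤ u ^ (H + 1) * r by positivity)
  refine le_of_mul_le_mul_left ?_ (show 0 < u ^ 2 by positivity)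
  calc _ ≤ _ := mul_le_mul_of_nonneg_left h2 (sq_nonneg u)
    _ ≤ _ := h1.trans h3
    _ = _ := by
      obtain ⟨m, rfl⟩ : ∃ m, H = m + 1 := ⟨H - 1, by omega⟩
      simp only [Nat.add_sub_cancel]
      ring

/-- Abstract conclusion: two-sided quadratic expansion with homogeneous first-order part. -/
lemma strict_of_expansion {E : Type*} [NormedAddCommGroup E] [NormedSpace ℝ E]
    (F G : E → ℝ) (W : E) (c C : ℝ) (hc : 0 < c)
    (hG : ∀ t : ℝ, 0 ≤ t → ∀ x, G (t • x) = t * G x)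
    (hlow : ∀ᶠ V in nhds W, F W + G (V - W) + c * ‖V - W‖ ^ 2 ≤ F V)
    (hup : ∀ᶠ V in nhds W, F V ≤ F W + G (V - W) + C * ‖V - W‖ ^ 2)
    (hmin : IsLocalMin F W) :
    ∃ ε > 0, ∀ V, 0 < ‖V - W‖ → ‖V - W‖ < ε → F W < F V := by
  have hpos : ∀ x, 0 ≤ G x := by
    intro x
    have hcont : Filter.Tendsto (fun t : ℝ => W + t • x) (nhdsWithin 0 (Set.Ioi 0)) (nhds W) := by
      have : Continuous fun t : ℝ => W + t • x := by fun_prop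
      have h := this.tendsto 0
      simp only [zero_smul, add_zero] at h
      exact h.mono_left nhdsWithin_le_nhds
    have hev : ∀ᶠ t in nhdsWithin (0:ℝ) (Set.Ioi 0), 0 ≤ G x + C * t * ‖x‖ ^ 2 := by
      filter_upwards [hcont.eventually hup, hcont.eventually hmin, self_mem_nhdsWithin]
        with t h1 h2 h3
      have h3 : 0 < t := h3
      rw [add_sub_cancel_left, hG t h3.le, norm_smul, Real.norm_of_nonneg h3.le] at h1
      have : 0 ≤ t * (G x + C * t * ‖x‖ ^ 2) := by nlinarith
      exact nonneg_of_mul_nonneg_right this h3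
    have hlim : Filter.Tendsto (fun t : ℝ => G x + C * t * ‖x‖ ^ 2)
        (nhdsWithin 0 (Set.Ioi 0)) (nhds (G x)) := by
      have : Continuous fun t : ℝ => G x + C * t * ‖x‖ ^ 2 := by fun_prop
      have h := this.tendsto 0
      simp only [mul_zero, zero_mul, add_zero] at h
      exact h.mono_left nhdsWithin_le_nhds
    exact ge_of_tendsto hlim hev
  obtain ⟨ε, hε, h⟩ := Metric.eventually_nhds_iff.mp hlow
  refine ⟨ε, hε, fun V h1 h2 => ?_⟩
  have h3 := h (show dist V W < ε by rwa [dist_eq_norm])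
  have h4 := hpos (V - W)
  have : 0 < c * ‖V - W‖ ^ 2 := by positivity
  linarith

/-- every local minimum of `ℓ_λ` in `U(λ,θ)` (no differentiability
assumed) is an isolated local minimum. -/
theorem local_minima_are_isolated (n : ℕ → ℕ) (H : ℕ) (hH : 1 ≤ H)
    (hout : n (H + 1) = 1) (hwidth : ∀ i, 1 ≤ i → i ≤ H → 1 < n i)
    (N : ℕ) (a : Fin N → EuclideanSpace ℝ (Fin (n 0)))
    (f : EuclideanSpace ℝ (Fin (n 0)) → ℝ)
    (r lam θ : ℝ) (hr : 0 < r) (hθ : 0 < θ) (hθlam : θ < lam)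
    (hnorm : ∀ i, ‖a i‖ ≤ r)
    (W : WeightSpace n H) (hW : W ∈ Uset n H N hout a f lam θ r)
    (hmin : IsLocalMin (lossReg n H N hout a f lam) W) :
    ∃ ε > 0, ∀ V : WeightSpace n H, 0 < ‖V - W‖ → ‖V - W‖ < ε →
      lossReg n H N hout a f lam W < lossReg n H N hout a f lam V := by
  have hHpos : (1:ℝ) ≤ H := by exact_mod_cast hH
  have hw0 : 0 ≤ starNorm n H W := Real.iSup_nonneg fun i => norm_nonneg _
  have hl0 : 0 ≤ loss n H N hout a f W := by unfold loss; positivity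
  set L := Real.sqrt (loss n H N hout a f W) with hL
  have hLnn : 0 ≤ L := Real.sqrt_nonneg _
  set w := starNorm n H W with hw
  -- the smallness condition, in the form needed
  have hsmall : Real.sqrt 2 * L * (w ^ (H - 1) * r * (H / 2)) < lam / 2 := by
    have hW' : L * w ^ (H - 1) < (lam - θ) / (Real.sqrt 2 * ((H : ℝ) * ((H : ℝ) + 1)) * r) := hW
    rw [lt_div_iff₀ (by positivity)] at hW'
    have h2 : 0 ≤ L * w ^ (H - 1) * (Real.sqrt 2 * H * r) := by positivity
    nlinarith
  -- choose `u > w`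
  obtain ⟨u, hu, huw⟩ : ∃ u, w < u ∧ Real.sqrt 2 * L * (u ^ (H - 1) * r * (H / 2)) < lam / 2 := by
    have hc : Continuous fun u : ℝ => Real.sqrt 2 * L * (u ^ (H - 1) * r * (H / 2)) := by fun_prop
    have h1 := (hc.tendsto w).eventually (Iio_mem_nhds hsmall)
    have h2 := (h1.filter_mono nhdsWithin_le_nhds).and
      (self_mem_nhdsWithin (a := w) (s := Set.Ioi w))
    obtain ⟨u, h3, h4⟩ := h2.exists
    exact ⟨u, h4, h3⟩
  have hu0 : 0 < u := lt_of_le_of_lt hw0 hu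
  set K := u ^ (H - 1) * r * (H / 2) with hK
  have hK0 : 0 ≤ K := by positivity
  set D := u ^ H * r * (H + 1) with hD
  have hD0 : 0 ≤ D := by positivity
  set e : Fin N → ℝ := fun i => netOut n H hout W (a i) - f (a i) with he
  set M : ℝ := 1 / (2 * (N : ℝ)) with hM
  have hM0 : 0 ≤ M := by positivity
  have hlossW : loss n H N hout a f W = M * ∑ i, e i ^ 2 := by
    unfold loss
    congr 1
    exact Finset.sum_congr rfl fun i _ => by simp only [he]; ring
  -- mean absolute error
  have hmean : M * ∑ i, 2 * |e i| ≤ Real.sqrt 2 * L := by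
    rw [hL, ← Real.sqrt_mul (by norm_num)]
    apply Real.le_sqrt_of_sq_le
    have h1 := sq_sum_le_card_mul_sum_sq (s := Finset.univ) (f := fun i => |e i|)
    simp only [sq_abs, Finset.card_univ, Fintype.card_fin] at h1
    rw [← Finset.mul_sum, hlossW]
    rcases Nat.eq_zero_or_pos N with h0 | h0
    · have : M = 0 := by simp [hM, h0]
      rw [this]; simp
    · have hN : (0:ℝ) < N := by exact_mod_cast h0
      have hMN : 2 * M * N = 1 := by rw [hM]; field_simp
      calc _ = 4 * M ^ 2 * (∑ i, |e i|) ^ 2 := by ring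
        _ ≤ 4 * M ^ 2 * (N * ∑ i, e i ^ 2) := mul_le_mul_of_nonneg_left h1 (by positivity)
        _ = (2 * M * N) * (2 * (M * ∑ i, e i ^ 2)) := by ring
        _ = _ := by rw [hMN, one_mul]
  have hev : ∀ᶠ V in nhds W, ∀ i, |netOut n H hout V (a i) - netOut n H hout W (a i)
      - dOut n H hout W (V - W) (a i)| ≤ K * ‖V - W‖ ^ 2 := by
    rw [Filter.eventually_all]
    exact fun i => eOut_bound n H hH hout W u r hu0 hr hu (a i) (hnorm i)
  have hball : ∀ᶠ V in nhds W, ‖V - W‖ < 1 := by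
    have : Continuous fun V : WeightSpace n H => ‖V - W‖ := by fun_prop
    exact (this.tendsto W).eventually (Iio_mem_nhds (by simp))
  set G : WeightSpace n H → ℝ := fun X =>
    M * ∑ i, 2 * e i * dOut n H hout W X (a i) + lam * inner ℝ W X with hGdef
  have hexp : ∀ V, lossReg n H N hout a f lam V = lossReg n H N hout a f lam W + G (V - W)
      + lam / 2 * ‖V - W‖ ^ 2 + M * ∑ i, (2 * e i * (netOut n H hout V (a i)
        - netOut n H hout W (a i) - dOut n H hout W (V - W) (a i))
        + (netOut n H hout V (a i) - netOut n H hout W (a i)) ^ 2) := by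
    intro V
    have h1 : ‖V‖ ^ 2 = ‖W‖ ^ 2 + 2 * inner ℝ W (V - W) + ‖V - W‖ ^ 2 := by
      rw [← norm_add_sq_real]; congr 2; abel
    have h2 : loss n H N hout a f V = loss n H N hout a f W
        + M * ∑ i, 2 * e i * dOut n H hout W (V - W) (a i)
        + M * ∑ i, (2 * e i * (netOut n H hout V (a i)
        - netOut n H hout W (a i) - dOut n H hout W (V - W) (a i))
        + (netOut n H hout V (a i) - netOut n H hout W (a i)) ^ 2) := by
      rw [hlossW, ← mul_add, ← mul_add, ← Finset.sum_add_distrib, ← Finset.sum_add_distrib]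
      unfold loss
      congr 1
      exact Finset.sum_congr rfl fun i _ => by simp only [he]; ring
    unfold lossReg
    rw [h1, h2]
    simp only [hGdef]
    ring
  refine strict_of_expansion _ G W (lam / 2 - Real.sqrt 2 * L * K)
    (lam / 2 + M * ∑ i, (2 * |e i| * K + (D + K) ^ 2)) (by linarith) ?_ ?_ ?_ hmin
  · intro t ht x
    simp only [hGdef, inner_smul_right, dOut, dAct_homog n H W x _ t ht]
    rw [mul_add, mul_left_comm t M, Finset.mul_sum _ _ t]
    congr 1
    · congr 1
      exact Finset.sum_congr rfl fun i _ => by ring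
    · ring
  · filter_upwards [hev] with V hV
    rw [hexp V]
    have h1 : M * ∑ i, (-(2 * |e i|) * (K * ‖V - W‖ ^ 2)) ≤
        M * ∑ i, (2 * e i * (netOut n H hout V (a i)
        - netOut n H hout W (a i) - dOut n H hout W (V - W) (a i))
        + (netOut n H hout V (a i) - netOut n H hout W (a i)) ^ 2) := by
      refine mul_le_mul_of_nonneg_left (Finset.sum_le_sum fun i _ => ?_) hM0
      have h2 := mul_le_mul_of_nonneg_left (hV i) (abs_nonneg (e i))
      rw [← abs_mul] at h2
      have h3 := (abs_le.mp h2).1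
      nlinarith [sq_nonneg (netOut n H hout V (a i) - netOut n H hout W (a i))]
    have h4 : M * ∑ i, (-(2 * |e i|) * (K * ‖V - W‖ ^ 2))
        = - ((M * ∑ i, 2 * |e i|) * (K * ‖V - W‖ ^ 2)) := by
      rw [← Finset.sum_mul, Finset.sum_neg_distrib]; ring
    have h5 := mul_le_mul_of_nonneg_right hmean (show 0 ≤ K * ‖V - W‖ ^ 2 by positivity)
    linarith
  · filter_upwards [hev, hball] with V hV hV1
    rw [hexp V]
    have h1 : M * ∑ i, (2 * e i * (netOut n H hout V (a i)
        - netOut n H hout W (a i) - dOut n H hout W (V - W) (a i))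
        + (netOut n H hout V (a i) - netOut n H hout W (a i)) ^ 2) ≤
        M * ∑ i, (2 * |e i| * K + (D + K) ^ 2) * ‖V - W‖ ^ 2 := by
      refine mul_le_mul_of_nonneg_left (Finset.sum_le_sum fun i _ => ?_) hM0
      have h2 := mul_le_mul_of_nonneg_left (hV i) (abs_nonneg (e i))
      rw [← abs_mul] at h2
      have h3 := (abs_le.mp h2).2
      have h4 := dOut_bound n H hout W (V - W) u r hu0 hr hu.le (a i) (hnorm i)
      have h5 : K * ‖V - W‖ ^ 2 ≤ K * ‖V - W‖ :=
        mul_le_mul_of_nonneg_left (by nlinarith [norm_nonneg (V - W)]) hK0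
      have h6 : |netOut n H hout V (a i) - netOut n H hout W (a i)| ≤ (D + K) * ‖V - W‖ := by
        have h7 := abs_add_le (netOut n H hout V (a i) - netOut n H hout W (a i)
          - dOut n H hout W (V - W) (a i)) (dOut n H hout W (V - W) (a i))
        rw [sub_add_cancel] at h7
        have h8 := hV i
        linarith
      have h9 := pow_le_pow_left₀ (abs_nonneg _) h6 2
      rw [sq_abs, mul_pow] at h9
      linarith
    rw [← Finset.sum_mul] at h1
    linarith
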